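/- arXiv:2512.17295 — 3 statements merged into one kernel-verified Lean document; each statement's English description precedes it below -/
import Mathlib

section
/- Additive error of SpaceSaving: if the SpaceSaving algorithm with capacity k (and most-recent-eviction tie-breaking) processes a stream of length T, then every item i that is tracked at the end of the stream satisfies f_i ≤ Ĉ_i ≤ f_i + T/k, where Ĉ_i is its terminal counter value and f_i is its true frequency in the stream. -/
/-- State of the SpaceSaving algorithm: tracked set, counters (0 for untracked
items), and recency (last occurrence time, 0 if never seen). -/
structure SSState (α : Type) where
  tracked : Finset α
  count : α → ℕ
  recency : α → ℕ

variable {α : Type} [LinearOrder α]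

/-- The set of tracked items of minimum counter value. -/
def ssMinSet (s : SSState α) : Finset α :=
  s.tracked.filter (fun a => ∀ b ∈ s.tracked, s.count a ≤ s.count b)

/-- The eviction victim: among tracked items of minimum counter value, the one
with the largest recency (ties in recency broken by the order on `α`). -/
def ssEvict (s : SSState α) : Option α :=
  if h : ((ssMinSet s).filter (fun a => ∀ b ∈ ssMinSet s, s.recency b ≤ s.recency a)).Nonempty
  then some (((ssMinSet s).filter (fun a => ∀ b ∈ ssMinSet s, s.recency b ≤ s.recency a)).max' h)
  else none

/-- One step of SpaceSaving with capacity `k` at time `t`; a `none` update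
contributes nothing. -/
def ssStep (k t : ℕ) (s : SSState α) : Option α → SSState α
  | none => s
  | some x =>
    if x ∈ s.tracked then
      ⟨s.tracked, Function.update s.count x (s.count x + 1), Function.update s.recency x t⟩
    else if s.tracked.card < k then
      ⟨insert x s.tracked, Function.update s.count x 1, Function.update s.recency x t⟩
    else
      match ssEvict s with
      | none => s
      | some y =>
        ⟨insert x (s.tracked.erase y),
         Function.update (Function.update s.count y 0) x (s.count y + 1),
         Function.update s.recency x t⟩

def ssRunAux (k : ℕ) : SSState α → ℕ → List (Option α) → SSState α
  | s, _, [] => s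
  | s, t, x :: xs => ssRunAux k (ssStep k t s x) (t + 1) xs

/-- Run SpaceSaving with capacity `k` on a stream (positions are 1-indexed). -/
def ssRun (k : ℕ) (X : List (Option α)) : SSState α :=
  ssRunAux k ⟨∅, fun _ => 0, fun _ => 0⟩ 1 X

/-- The invariant relating the state of SpaceSaving to the processed prefix `L`. -/
structure SSInvariant (k : ℕ) (L : List α) (s : SSState α) : Prop where
  card_le : s.tracked.card ≤ k
  sum_count : ∑ a ∈ s.tracked, s.count a = L.length
  le_count : ∀ a ∈ s.tracked, L.count a ≤ s.count a
  count_le : ∀ a ∈ s.tracked, k * s.count a ≤ k * L.count a + L.length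
  card_eq_of_untracked : ∀ a ∉ s.tracked, a ∈ L → s.tracked.card = k
  le_of_untracked : ∀ a ∉ s.tracked, ∀ b ∈ s.tracked, L.count a ≤ s.count b

theorem exists_ssEvict_eq_some (s : SSState α)
    (hs : s.tracked.Nonempty) :
    ∃ y ∈ s.tracked, (∀ b ∈ s.tracked, s.count y ≤ s.count b) ∧ ssEvict s = some y := by
  have hmin : (ssMinSet s).Nonempty := by
    obtain ⟨a, ha, hle⟩ := s.tracked.exists_min_image s.count hs
    exact ⟨a, Finset.mem_filter.2 ⟨ha, hle⟩⟩
  have hrec : ((ssMinSet s).filter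
      (fun a => ∀ b ∈ ssMinSet s, s.recency b ≤ s.recency a)).Nonempty := by
    obtain ⟨a, ha, hle⟩ := (ssMinSet s).exists_max_image s.recency hmin
    exact ⟨a, Finset.mem_filter.2 ⟨ha, hle⟩⟩
  have hmem := Finset.mem_filter.1 (Finset.mem_filter.1 (Finset.max'_mem _ hrec)).1
  exact ⟨_, hmem.1, hmem.2, dif_pos hrec⟩

namespace SSInvariant

variable {k : ℕ} {L : List α} {s : SSState α}

theorem empty (k : ℕ) : SSInvariant k ([] : List α) ⟨∅, fun _ => 0, fun _ => 0⟩ := by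
  constructor <;> simp

theorem increment (h : SSInvariant k L s) {x : α} (hx : x ∈ s.tracked) (r : α → ℕ) :
    SSInvariant k (L ++ [x])
      ⟨s.tracked, Function.update s.count x (s.count x + 1), r⟩ where
  card_le := h.card_le
  sum_count := by
    have hsum := h.sum_count
    rw [← Finset.add_sum_erase _ _ hx] at hsum
    simp only [Finset.sum_update_of_mem hx, Finset.sdiff_singleton_eq_erase, List.length_append,
      List.length_singleton]
    omega
  le_count a ha := by
    have := h.le_count a ha
    by_cases hax : a = x
    · subst hax; simpa
    · simpa [hax, Ne.symm hax] using this
  count_le a ha := by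
    have := h.count_le a ha
    by_cases hax : a = x
    · subst hax; simp [mul_add]; omega
    · simp [hax, Ne.symm hax]; omega
  card_eq_of_untracked a ha haL := by
    have hax : a ≠ x := fun e => ha (e ▸ hx)
    exact h.card_eq_of_untracked a ha (by simpa [hax] using haL)
  le_of_untracked a ha b hb := by
    have hax : a ≠ x := fun e => ha (e ▸ hx)
    have := h.le_of_untracked a ha b hb
    by_cases hbx : b = x
    · subst hbx; simp [hax.symm]; omega
    · simpa [hbx, hax.symm] using this

theorem insert_of_card_lt (h : SSInvariant k L s) {x : α} (hx : x ∉ s.tracked)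
    (hcard : s.tracked.card < k) (r : α → ℕ) :
    SSInvariant k (L ++ [x])
      ⟨insert x s.tracked, Function.update s.count x 1, r⟩ := by
  have hnot : ∀ a ∉ s.tracked, a ∉ L := fun a ha haL =>
    hcard.ne (h.card_eq_of_untracked a ha haL)
  refine ⟨?_, ?_, ?_, ?_, ?_, ?_⟩
  · simp only [Finset.card_insert_of_notMem hx]; omega
  · simp only [Finset.sum_insert hx, Finset.sum_update_of_notMem hx, h.sum_count]
    simp [add_comm]
  · intro a ha
    by_cases hax : a = x
    · subst hax; simp [List.count_eq_zero_of_not_mem (hnot a hx)]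
    · simpa [hax, Ne.symm hax] using h.le_count a (Finset.mem_of_mem_insert_of_ne ha hax)
  · intro a ha
    by_cases hax : a = x
    · subst hax; simp [mul_add]; omega
    · have := h.count_le a (Finset.mem_of_mem_insert_of_ne ha hax)
      simp [hax, Ne.symm hax]; omega
  · intro a ha haL
    simp only [Finset.mem_insert, not_or] at ha
    exact absurd (by simpa [ha.1] using haL) (hnot a ha.2)
  · intro a ha b _
    simp only [Finset.mem_insert, not_or] at ha
    simp [Ne.symm ha.1, List.count_eq_zero_of_not_mem (hnot a ha.2)]

theorem replace (h : SSInvariant k L s) {x y : α} (hx : x ∉ s.tracked) (hy : y ∈ s.tracked)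
    (hmin : ∀ b ∈ s.tracked, s.count y ≤ s.count b) (hcard : k ≤ s.tracked.card) (r : α → ℕ) :
    SSInvariant k (L ++ [x])
      ⟨insert x (s.tracked.erase y),
        Function.update (Function.update s.count y 0) x (s.count y + 1), r⟩ := by
  have hx' : x ∉ s.tracked.erase y := fun hmem => hx (Finset.mem_of_mem_erase hmem)
  have hk : s.tracked.card = k := h.card_le.antisymm hcard
  have hcard' : (insert x (s.tracked.erase y)).card = k := by
    rw [Finset.card_insert_of_notMem hx', Finset.card_erase_add_one hy, hk]
  have hky : k * s.count y ≤ L.length := by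
    rw [← h.sum_count, ← hk, ← smul_eq_mul]
    exact Finset.card_nsmul_le_sum _ _ _ hmin
  refine ⟨hcard'.le, ?_, ?_, ?_, fun _ _ _ => hcard', ?_⟩
  · have hsum := h.sum_count
    rw [← Finset.add_sum_erase _ _ hy] at hsum
    simp only [Finset.sum_insert hx', Finset.sum_update_of_notMem hx',
      Finset.sum_update_of_notMem (Finset.notMem_erase y s.tracked), Function.update_self,
      List.length_append, List.length_singleton]
    omega
  · intro a ha
    by_cases hax : a = x
    · subst hax; simpa using h.le_of_untracked a hx y hy
    · have ha' := Finset.mem_erase.1 (Finset.mem_of_mem_insert_of_ne ha hax)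
      simpa [hax, Ne.symm hax, ha'.1] using h.le_count a ha'.2
  · intro a ha
    by_cases hax : a = x
    · subst hax; simp [mul_add]; omega
    · have ha' := Finset.mem_erase.1 (Finset.mem_of_mem_insert_of_ne ha hax)
      have := h.count_le a ha'.2
      simp [hax, Ne.symm hax, ha'.1]; omega
  · intro a ha b hb
    simp only [Finset.mem_insert, Finset.mem_erase, not_or, not_and] at ha
    have hya : L.count a ≤ s.count y := by
      by_cases hay : a = y
      · exact hay ▸ h.le_count a (hay ▸ hy)
      · exact h.le_of_untracked a (ha.2 hay) y hy
    by_cases hbx : b = x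
    · subst hbx; simp [Ne.symm ha.1]; omega
    · have hb' := Finset.mem_erase.1 (Finset.mem_of_mem_insert_of_ne hb hbx)
      simpa [hbx, Ne.symm ha.1, hb'.1] using hya.trans (hmin b hb'.2)

theorem step (h : SSInvariant k L s) (hk : 1 ≤ k) (t : ℕ) (x : α) :
    SSInvariant k (L ++ [x]) (ssStep k t s (some x)) := by
  by_cases hx : x ∈ s.tracked
  · simpa only [ssStep, if_pos hx] using h.increment hx _
  by_cases hcard : s.tracked.card < k
  · simpa only [ssStep, if_neg hx, if_pos hcard] using h.insert_of_card_lt hx hcard _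
  obtain ⟨y, hy, hmin, hevict⟩ := exists_ssEvict_eq_some s (Finset.card_pos.1 (by omega))
  simpa only [ssStep, if_neg hx, if_neg hcard, hevict] using
    h.replace hx hy hmin (not_lt.1 hcard) _

theorem runAux (hk : 1 ≤ k) (X : List α) (h : SSInvariant k L s) (t : ℕ) :
    SSInvariant k (L ++ X) (ssRunAux k s t (X.map some)) := by
  induction X generalizing L s t with
  | nil => simpa [ssRunAux] using h
  | cons x X ih => simpa [ssRunAux] using ih (h.step hk t x) (t + 1)

theorem run (hk : 1 ≤ k) (X : List α) : SSInvariant k X (ssRun k (X.map some)) := by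
  simpa [ssRun] using (empty (α := α) k).runAux hk X 1

end SSInvariant

/-- **Additive error of SpaceSaving.**  If SpaceSaving with capacity `k` (and
most-recent-eviction tie-breaking) processes a stream `X` of length `T`, then
every item `i` tracked at the end of the stream satisfies
`f_i ≤ Ĉ_i ≤ f_i + T / k`, where `Ĉ_i` is its terminal counter value and
`f_i` its true frequency in the stream. -/
theorem spaceSaving_additive_error {α : Type} [LinearOrder α] (k : ℕ) (hk : 1 ≤ k)
    (X : List α) :
    ∀ i ∈ (ssRun k (X.map some)).tracked,
      X.count i ≤ (ssRun k (X.map some)).count i ∧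
      ((ssRun k (X.map some)).count i : ℝ) ≤ (X.count i : ℝ) + (X.length : ℝ) / (k : ℝ) := by
  intro i hi
  have h := SSInvariant.run hk X
  refine ⟨h.le_count i hi, ?_⟩
  have hkpos : (0 : ℝ) < k := by exact_mod_cast hk
  have hle : (k : ℝ) * (ssRun k (X.map some)).count i ≤ k * X.count i + X.length := by
    exact_mod_cast h.count_le i hi
  rw [← sub_le_iff_le_add', le_div_iff₀ hkpos]
  linarith
end

section
/- For the parallel runs of SpaceSaving on neighboring streams, for every time t ≥ i and every item a tracked in both runs (a ∈ T_t ∩ T'_t), if the counters agree, C_t[a] = C'_t[a], then the recencies agree as well: τ_t[a] = τ'_t[a]. -/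
variable {α : Type} [LinearOrder α]

section NeighborStates

variable {α : Type} [LinearOrder α]

/-- State (S1) of the pair of SpaceSaving data structures on neighboring streams:
(a) the tracked sets coincide; (b) there is `y ∈ T` with `C[y] = C'[y] + 1`;
(c) all other tracked counters coincide. -/
def StateS1 (s s' : SSState α) : Prop :=
  s.tracked = s'.tracked ∧
  ∃ y ∈ s.tracked, s.count y = s'.count y + 1 ∧
    ∀ z ∈ s.tracked, z ≠ y → s.count z = s'.count z

/-- State (S2): (a) `T ≠ T'` with `T \ T' = {z}` and `T' \ T = {z'}`;
(b) counters agree on `T ∩ T'`; (c) `C[z] = C'[z'] + 1`, `z'` attains the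
minimum counter in `T'`, and `C[z] ≤ min_{a ∈ T} C[a] + 1`. -/
def StateS2 (s s' : SSState α) : Prop :=
  s.tracked ≠ s'.tracked ∧
  ∃ z z' : α,
    s.tracked \ s'.tracked = {z} ∧ s'.tracked \ s.tracked = {z'} ∧
    (∀ a ∈ s.tracked ∩ s'.tracked, s.count a = s'.count a) ∧
    s.count z = s'.count z' + 1 ∧
    (∀ a ∈ s'.tracked, s'.count z' ≤ s'.count a) ∧
    (∀ a ∈ s.tracked, s.count z ≤ s.count a + 1)

/-- State (S3): (a) `T ≠ T'` with `T \ T' = {z}` and `T' \ T = {z'}`;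
(b) there is `y ∈ T ∩ T'` with `C[y] = C'[y] + 1` and the counters agree on the
rest of the intersection; (c) `C[z] = C'[z']` and both attain the minimum
counter value of their respective tracked sets. -/
def StateS3 (s s' : SSState α) : Prop :=
  s.tracked ≠ s'.tracked ∧
  ∃ z z' : α,
    s.tracked \ s'.tracked = {z} ∧ s'.tracked \ s.tracked = {z'} ∧
    (∃ y ∈ s.tracked ∩ s'.tracked, s.count y = s'.count y + 1 ∧
      ∀ a ∈ s.tracked ∩ s'.tracked, a ≠ y → s.count a = s'.count a) ∧
    s.count z = s'.count z' ∧
    (∀ a ∈ s.tracked, s.count z ≤ s.count a) ∧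
    (∀ a ∈ s'.tracked, s'.count z' ≤ s'.count a)

/-- State (S4): (a) `T ≠ T'` with `T \ T' = {z₁, z₂}` and `T' \ T = {z₁', z₂'}`;
(b) counters agree on `T ∩ T'`;
(c) `C[z₁] − 1 = C[z₂] = C'[z₁'] = C'[z₂'] = min_{a∈T} C[a] = min_{a∈T'} C'[a]`;
(d) among the minimum-count items of `T'`, the one with largest recency (the
eviction victim of the primed run) belongs to `W' = T' \ T`. -/
def StateS4 (s s' : SSState α) : Prop :=
  s.tracked ≠ s'.tracked ∧
  ∃ z₁ z₂ z₁' z₂' : α, z₁ ≠ z₂ ∧ z₁' ≠ z₂' ∧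
    s.tracked \ s'.tracked = {z₁, z₂} ∧ s'.tracked \ s.tracked = {z₁', z₂'} ∧
    (∀ a ∈ s.tracked ∩ s'.tracked, s.count a = s'.count a) ∧
    s.count z₁ = s.count z₂ + 1 ∧
    s.count z₂ = s'.count z₁' ∧ s'.count z₁' = s'.count z₂' ∧
    (∀ a ∈ s.tracked, s.count z₂ ≤ s.count a) ∧
    (∀ a ∈ s'.tracked, s'.count z₁' ≤ s'.count a) ∧
    (∃ w, ssEvict s' = some w ∧ w ∈ s'.tracked \ s.tracked)

end NeighborStates

variable {α : Type} [LinearOrder α]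

/-- The SpaceSaving state after processing the first `t` positions of the
stream `X` (capacity `k`, positions 1-indexed). -/
def ssNbState (k : ℕ) (X : List α) (t : ℕ) : SSState α :=
  ssRun k ((X.map some).take t)

/-- The SpaceSaving state after processing the first `t` positions of the
neighboring stream `X′`, which is `X` with the single update at (1-indexed)
position `i` removed, i.e. replaced by an empty update contributing nothing. -/
def ssNbState' (k : ℕ) (X : List α) (i t : ℕ) : SSState α :=
  ssRun k (((X.map some).set (i - 1) none).take t)

theorem ssEvict_ne_none {α : Type} [LinearOrder α] {s : SSState α} (h : s.tracked.Nonempty) :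
    ssEvict s ≠ none := by
  obtain ⟨a, ha, hmin⟩ := s.tracked.exists_min_image s.count h
  have hM : (ssMinSet s).Nonempty := ⟨a, Finset.mem_filter.2 ⟨ha, hmin⟩⟩
  obtain ⟨b, hb, hmax⟩ := (ssMinSet s).exists_max_image s.recency hM
  have hne : ((ssMinSet s).filter
      (fun a => ∀ b ∈ ssMinSet s, s.recency b ≤ s.recency a)).Nonempty :=
    ⟨b, Finset.mem_filter.2 ⟨hb, hmax⟩⟩
  simp [ssEvict, hne]

theorem ssStep_recency {α : Type} [LinearOrder α] {k : ℕ} (hk : 1 ≤ k) (t : ℕ)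
    (s : SSState α) (x : α) :
    (ssStep k t s (some x)).recency = Function.update s.recency x t := by
  simp only [ssStep]
  split_ifs with h1 h2
  · rfl
  · rfl
  · have hne : s.tracked.Nonempty := Finset.card_pos.1 (by omega)
    have := ssEvict_ne_none hne
    split <;> simp_all

/-- An item that survives a step in which it does not arrive keeps its counter. -/
theorem ssStep_of_ne {α : Type} [LinearOrder α] {k t : ℕ} {s : SSState α} {x p : α}
    (hx : p ≠ x) (hp : p ∈ (ssStep k t s (some x)).tracked) :
    p ∈ s.tracked ∧ (ssStep k t s (some x)).count p = s.count p := by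
  simp only [ssStep] at hp ⊢
  split_ifs at hp ⊢ with h1 h2
  · simp_all
  · simp_all
  · split at hp <;> simp_all

theorem ssRunAux_append {α : Type} [LinearOrder α] (k : ℕ) (l m : List (Option α))
    (s : SSState α) (t : ℕ) :
    ssRunAux k s t (l ++ m) = ssRunAux k (ssRunAux k s t l) (t + l.length) m := by
  induction l generalizing s t with
  | nil => rfl
  | cons x l ih =>
    simp only [List.cons_append, ssRunAux, ih, List.length_cons]
    congr 1
    omega

/-- The recencies of two states agree except possibly at `p`, and if they disagree there, then
`p` does not have the same counter value in both tracked sets. -/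
def RecencyAgreesExcept {α : Type} (p : α) (s s' : SSState α) : Prop :=
  (∀ a, a ≠ p → s.recency a = s'.recency a) ∧
    (s.recency p = s'.recency p ∨
      (p ∈ s.tracked → p ∈ s'.tracked → s.count p ≠ s'.count p))

theorem RecencyAgreesExcept.recency_eq {α : Type} {p : α} {s s' : SSState α}
    (h : RecencyAgreesExcept p s s') {a : α} (ha : a ∈ s.tracked) (ha' : a ∈ s'.tracked)
    (hc : s.count a = s'.count a) : s.recency a = s'.recency a := by
  by_cases hap : a = p
  · subst hap
    exact h.2.resolve_right fun h' => h' ha ha' hc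
  · exact h.1 a hap

theorem RecencyAgreesExcept.step {α : Type} [LinearOrder α] {k : ℕ} (hk : 1 ≤ k) (t : ℕ)
    {p : α} {s s' : SSState α} (h : RecencyAgreesExcept p s s') (x : Option α) :
    RecencyAgreesExcept p (ssStep k t s x) (ssStep k t s' x) := by
  cases x with
  | none => exact h
  | some x =>
    refine ⟨fun a ha => ?_, ?_⟩
    · simp only [ssStep_recency hk, Function.update_apply, h.1 a ha]
    · by_cases hpx : p = x
      · left
        simp [ssStep_recency hk, hpx]
      · refine h.2.imp (fun hr => ?_) fun hc hp hp' => ?_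
        · simp only [ssStep_recency hk, Function.update_apply, hr]
        · obtain ⟨hm, he⟩ := ssStep_of_ne hpx hp
          obtain ⟨hm', he'⟩ := ssStep_of_ne hpx hp'
          rw [he, he']
          exact hc hm hm'

theorem RecencyAgreesExcept.run {α : Type} [LinearOrder α] {k : ℕ} (hk : 1 ≤ k) {p : α}
    (l : List (Option α)) {s s' : SSState α} (h : RecencyAgreesExcept p s s') (t : ℕ) :
    RecencyAgreesExcept p (ssRunAux k s t l) (ssRunAux k s' t l) := by
  induction l generalizing s s' t with
  | nil => exact h
  | cons x l ih => exact ih (h.step hk t x) (t + 1)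

theorem recencyAgreesExcept_ssStep_self {α : Type} [LinearOrder α] {k : ℕ} (hk : 1 ≤ k) (t : ℕ)
    (s : SSState α) (p : α) : RecencyAgreesExcept p (ssStep k t s (some p)) s := by
  refine ⟨fun a ha => ?_, Or.inr fun _ hp => ?_⟩
  · simp [ssStep_recency hk, Function.update_of_ne ha]
  · simp [ssStep, hp]

/-- **Agreement of recencies from agreement of counters.**  For the parallel
runs of SpaceSaving on neighboring streams, for every time `t ≥ i` and every
item `a` tracked in both runs, if the counters agree then the recencies agree
as well. -/
theorem ss_neighbor_recency {α : Type} [LinearOrder α] (k : ℕ) (hk : 1 ≤ k)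
    (X : List α) (i : ℕ) (hi1 : 1 ≤ i) (hi2 : i ≤ X.length) :
    ∀ t, i ≤ t → t ≤ X.length →
      ∀ a, a ∈ (ssNbState k X t).tracked → a ∈ (ssNbState' k X i t).tracked →
        (ssNbState k X t).count a = (ssNbState' k X i t).count a →
        (ssNbState k X t).recency a = (ssNbState' k X i t).recency a := by
  intro t hit _ a ha ha' hc
  obtain ⟨A, p, B, hX, hA⟩ : ∃ A p B, X = A ++ p :: B ∧ A.length = i - 1 :=
    ⟨X.take (i - 1), X[i - 1], X.drop (i - 1 + 1), by simp, by simp; omega⟩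
  obtain ⟨m, rfl⟩ : ∃ m, t = (A.map some).length + (m + 1) :=
    ⟨t - i, by rw [List.length_map]; omega⟩
  have hs : (X.map some).take ((A.map some).length + (m + 1))
      = A.map some ++ some p :: (B.map some).take m := by
    rw [hX, List.map_append, List.take_length_add_append]
    rfl
  have hs' : ((X.map some).set (i - 1) none).take ((A.map some).length + (m + 1))
      = A.map some ++ none :: (B.map some).take m := by
    rw [hX, List.map_append, List.set_append_right _ _ (by simp [hA]),
      List.take_length_add_append]
    simp [hA]
  have key : RecencyAgreesExcept p (ssNbState k X ((A.map some).length + (m + 1)))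
      (ssNbState' k X i ((A.map some).length + (m + 1))) := by
    rw [ssNbState, ssNbState', hs, hs', ssRun, ssRun, ssRunAux_append, ssRunAux_append]
    exact (recencyAgreesExcept_ssStep_self hk _ _ p).run hk _ _
  exact key.recency_eq ha ha' hc
end

section
/- Laplace mechanism for vector-valued functions: let ε > 0, let D be a set of inputs with a symmetric neighboring relation ∼, and let f : D → ℝ^d satisfy ‖f(X) − f(X')‖₁ ≤ 1 for all X ∼ X'. For each input X, let M(X) be the distribution of f(X) + (Z_1, …, Z_d), where Z_1, …, Z_d are independent random variables each with the Laplace distribution of scale 1/ε (i.e., M(X) is the pushforward of the d-fold product of Laplace(1/ε) measures under translation by f(X)). Then for all X ∼ X' and all measurable sets A ⊆ ℝ^d, M(X)(A) ≤ e^ε · M(X')(A); i.e., M is (ε, 0)-differentially private. -/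
open MeasureTheory

/-- The Laplace distribution with scale `b`: the measure on `ℝ` with density
`x ↦ (1 / (2b)) · exp (−|x| / b)` with respect to Lebesgue measure. -/
noncomputable def laplaceMeasure (b : ℝ) : Measure ℝ :=
  volume.withDensity fun x => ENNReal.ofReal ((1 / (2 * b)) * Real.exp (-|x| / b))

open scoped ENNReal

/-- A coordinatewise domination of measures up to finite nonzero constants passes to finite
product measures, with the product of the constants. -/
theorem MeasureTheory.Measure.pi_le_prod_smul_pi {ι : Type*} [Fintype ι] {α : ι → Type*}
    [∀ i, MeasurableSpace (α i)] {μ ν : ∀ i, Measure (α i)} {c : ι → ℝ≥0∞}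
    (hc₀ : ∀ i, c i ≠ 0) (hc : ∀ i, c i ≠ ∞) (h : ∀ i, μ i ≤ c i • ν i) :
    Measure.pi μ ≤ (∏ i, c i) • Measure.pi ν := by
  have hC₀ : ∏ i, c i ≠ 0 := Finset.prod_ne_zero_iff.2 fun i _ => hc₀ i
  have hC : ∏ i, c i ≠ ∞ := ENNReal.prod_ne_top fun i _ => hc i
  have key : (∏ i, c i)⁻¹ • OuterMeasure.pi (fun i => (μ i).toOuterMeasure) ≤
      OuterMeasure.pi fun i => (ν i).toOuterMeasure := by
    refine OuterMeasure.le_pi.2 fun s _ => ?_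
    rw [_root_.smul_apply, smul_eq_mul, ENNReal.inv_mul_le_iff hC₀ hC,
      ← Finset.prod_mul_distrib]
    exact (OuterMeasure.pi_pi_le _ s).trans (Finset.prod_le_prod' fun i _ => h i (s i))
  refine Measure.le_iff.2 fun A hA => ?_
  rw [Measure.smul_apply, smul_eq_mul, Measure.pi, Measure.pi, toMeasure_apply _ _ hA,
    toMeasure_apply _ _ hA, ← ENNReal.inv_mul_le_iff hC₀ hC]
  exact key A

theorem map_add_left_laplaceMeasure (a b : ℝ) :
    (laplaceMeasure b).map (fun x => a + x) = volume.withDensity fun x =>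
      ENNReal.ofReal ((1 / (2 * b)) * Real.exp (-|x - a| / b)) := by
  ext s hs
  have hadd : Measurable fun x : ℝ => a + x := measurable_const_add a
  rw [Measure.map_apply hadd hs, laplaceMeasure, withDensity_apply _ (hadd hs),
    withDensity_apply _ hs, ← (measurePreserving_add_left volume a).setLIntegral_comp_preimage hs
      (by fun_prop)]
  simp

instance sigmaFinite_map_add_left_laplaceMeasure (a b : ℝ) :
    SigmaFinite ((laplaceMeasure b).map fun x => a + x) := by
  rw [map_add_left_laplaceMeasure]
  infer_instance

theorem map_add_left_laplaceMeasure_le {b : ℝ} (hb : 0 < b) (x y : ℝ) :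
    (laplaceMeasure b).map (fun z => x + z) ≤
      ENNReal.ofReal (Real.exp (|x - y| / b)) • (laplaceMeasure b).map fun z => y + z := by
  rw [map_add_left_laplaceMeasure, map_add_left_laplaceMeasure,
    ← withDensity_smul' _ _ ENNReal.ofReal_ne_top]
  refine withDensity_mono (.of_forall fun z => ?_)
  rw [Pi.smul_apply, smul_eq_mul, ← ENNReal.ofReal_mul (Real.exp_nonneg _), mul_left_comm,
    ← Real.exp_add, ← add_div]
  refine ENNReal.ofReal_le_ofReal ?_
  gcongr
  linarith [abs_sub_le z x y]

theorem map_add_left_pi_laplaceMeasure {ι : Type*} [Fintype ι] (a : ι → ℝ) (b : ℝ) :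
    (Measure.pi fun _ : ι => laplaceMeasure b).map (fun z => a + z) =
      Measure.pi fun i => (laplaceMeasure b).map fun z => a i + z :=
  Measure.pi_map_pi (f := fun i z => a i + z) fun i => (measurable_const_add (a i)).aemeasurable

/-- **Laplace mechanism for vector-valued functions.**  Let `ε > 0`, let `D` be
a set of inputs with a symmetric neighboring relation, and let `f : D → ℝ^d`
have `ℓ₁`-sensitivity at most `1` on neighboring inputs.  Let `M X` be the
distribution of `f X + (Z₁, …, Z_d)` with `Zᵢ` i.i.d. `Laplace (1/ε)` (the
pushforward of the product of Laplace measures under translation by `f X`).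
Then for all neighbors `X ∼ X'` and all measurable `A ⊆ ℝ^d`,
`M X A ≤ e^ε · M X' A`; i.e. `M` is `(ε, 0)`-differentially private. -/
theorem laplace_mechanism_dp {D : Type} (ε : ℝ) (hε : 0 < ε) (d : ℕ)
    (neighbor : D → D → Prop) (hsymm : ∀ X X', neighbor X X' → neighbor X' X)
    (f : D → (Fin d → ℝ))
    (hsens : ∀ X X', neighbor X X' → (∑ i, |f X i - f X' i|) ≤ 1) :
    ∀ X X', neighbor X X' → ∀ A : Set (Fin d → ℝ), MeasurableSet A →
      Measure.map (fun z => f X + z)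
          (Measure.pi fun _ : Fin d => laplaceMeasure (1 / ε)) A ≤
        ENNReal.ofReal (Real.exp ε) *
          Measure.map (fun z => f X' + z)
            (Measure.pi fun _ : Fin d => laplaceMeasure (1 / ε)) A := by
  intro X X' hX A _
  rw [map_add_left_pi_laplaceMeasure, map_add_left_pi_laplaceMeasure]
  refine (Measure.pi_le_prod_smul_pi (fun i => ?_) (fun i => ENNReal.ofReal_ne_top)
    (fun i => map_add_left_laplaceMeasure_le (one_div_pos.2 hε) (f X i) (f X' i)) A).trans ?_
  · exact (ENNReal.ofReal_pos.2 (Real.exp_pos _)).ne'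
  · rw [Measure.smul_apply, smul_eq_mul,
      ← ENNReal.ofReal_prod_of_nonneg fun i _ => Real.exp_nonneg _, ← Real.exp_sum,
      ← Finset.sum_div, div_div_eq_mul_div, div_one]
    gcongr
    exact mul_le_of_le_one_left hε.le (hsens X X' hX)
end
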